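/- (Proposition 5.1, bound (5.3)) In the setting of the adaptive estimation scheme — a good pair (D, F), nested nonempty convex compact sets X¹ ⊆ ⋯ ⊆ X^K ⊆ ℝⁿ with A(X^K) ⊆ M, g ∈ ℝⁿ, ε ∈ (0, 1/4), δ > 0, component estimates ĝ^k with sup_{x∈X^k} Prob{|ĝ^k(ω) − gᵀx| > Φ_*^k(ln(2K/ε)) + δ} < ε/K, and the Lepskii-type adaptive estimate ĝ(ω) = ĝ^{k(ω)}(ω) built from them — the ε-risk of ĝ on each X^k satisfies, for all k with 1 ≤ k ≤ K: Risk^k(ĝ; ε) ≤ [6·ln(2K/ε)/ln(1/(4ε))]·Risk_*^k(ε) + 3δ, where Risk^k(ĝ; ε) is the ε-risk of ĝ over X^k and Risk_*^k(ε) is the minimax optimal ε-risk of recovering gᵀx over X^k. -/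

import Mathlib

open MeasureTheory Real Matrix Set
open scoped ENNReal

/-- A "good pair" `(𝒟, ℱ)` in the sense of Juditsky–Nemirovski:
a parametric family of positive probability densities `p μ`, `μ ∈ M`, on `(Ω, P)`,
together with a finite-dimensional linear space `F` of Borel functions on `Ω`
containing the constants, such that log-likelihood ratios belong to `F` and
`μ ↦ ln ∫ e^{φ} p_μ dP` is well defined (finite, witnessed by integrability)
and concave on `M` for every `φ ∈ F`. -/
structure GoodPair (Ω : Type*) [MeasurableSpace Ω] (P : Measure Ω)
    (E : Type*) [NormedAddCommGroup E] [NormedSpace ℝ E] where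
  M : Set E
  p : E → Ω → ℝ
  F : Submodule ℝ (Ω → ℝ)
  M_open : IsOpen M
  M_convex : Convex ℝ M
  p_meas : ∀ μ ∈ M, Measurable (p μ)
  p_pos : ∀ μ ∈ M, ∀ ω, 0 < p μ ω
  p_prob : ∀ μ ∈ M, ∫ ω, p μ ω ∂P = 1
  F_fd : FiniteDimensional ℝ F
  F_meas : ∀ φ ∈ F, Measurable φ
  F_const : ∀ c : ℝ, (fun _ : Ω => c) ∈ F
  logratio_mem : ∀ μ ∈ M, ∀ ν ∈ M, (fun ω => Real.log (p μ ω / p ν ω)) ∈ F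
  F_finite : ∀ φ ∈ F, ∀ μ ∈ M, Integrable (fun ω => Real.exp (φ ω) * p μ ω) P
  F_concave : ∀ φ ∈ F,
    ConcaveOn ℝ M (fun μ => Real.log (∫ ω, Real.exp (φ ω) * p μ ω ∂P))

variable {Ω : Type*} [MeasurableSpace Ω] {P : Measure Ω}
  {E : Type*} [NormedAddCommGroup E] [NormedSpace ℝ E] {n : ℕ}

/-- The distribution of the observation when the parameter is `μ`:
the measure with density `p μ` with respect to `P`. -/
noncomputable def obsMeasure (D : GoodPair Ω P E) (μ : E) : Measure Ω :=
  P.withDensity fun ω => ENNReal.ofReal (D.p μ ω)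

/-- The `ε`-risk of an estimate `ghat` of the linear form `gᵀx`, `x ∈ X`:
`inf {δ | sup_{x ∈ X} Prob_{ω ∼ p_{A(x)}·P} {|ghat ω - gᵀx| > δ} < ε}`. -/
noncomputable def Risk (D : GoodPair Ω P E) (A : (Fin n → ℝ) →ᵃ[ℝ] E)
    (g : Fin n → ℝ) (X : Set (Fin n → ℝ)) (ghat : Ω → ℝ) (ε : ℝ) : ℝ :=
  sInf {δ : ℝ |
    (⨆ x ∈ X, obsMeasure D (A x) {ω | δ < |ghat ω - g ⬝ᵥ x|}) < ENNReal.ofReal ε}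

/-- The minimax optimal `ε`-risk over all (Borel) estimates. -/
noncomputable def RiskStar (D : GoodPair Ω P E) (A : (Fin n → ℝ) →ᵃ[ℝ] E)
    (g : Fin n → ℝ) (X : Set (Fin n → ℝ)) (ε : ℝ) : ℝ :=
  sInf {ρ : ℝ | ∃ ghat : Ω → ℝ, Measurable ghat ∧ ρ = Risk D A g X ghat ε}

/-- The minimax optimal `ε`-risk over affine estimates, i.e. estimates `φ ∈ F`. -/
noncomputable def RiskAff (D : GoodPair Ω P E) (A : (Fin n → ℝ) →ᵃ[ℝ] E)
    (g : Fin n → ℝ) (X : Set (Fin n → ℝ)) (ε : ℝ) : ℝ :=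
  sInf {ρ : ℝ | ∃ φ ∈ D.F, ρ = Risk D A g X φ ε}

/-- The function `Φ_r(x, y; φ, α)`. -/
noncomputable def PhiFun (D : GoodPair Ω P E) (A : (Fin n → ℝ) →ᵃ[ℝ] E)
    (g : Fin n → ℝ) (r : ℝ) (x y : Fin n → ℝ) (φ : Ω → ℝ) (α : ℝ) : ℝ :=
  g ⬝ᵥ x - g ⬝ᵥ y
    + α * Real.log (∫ ω, Real.exp (φ ω / α) * D.p (A y) ω ∂P)
    + α * Real.log (∫ ω, Real.exp (-φ ω / α) * D.p (A x) ω ∂P)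
    + 2 * α * r

/-- `Φ_*(r)` defined through the sup-inf value:
`2Φ_*(r) = sup_{x,y ∈ X} inf_{φ ∈ F, α > 0} Φ_r(x, y; φ, α)`. -/
noncomputable def PhiStarSI (D : GoodPair Ω P E) (A : (Fin n → ℝ) →ᵃ[ℝ] E)
    (g : Fin n → ℝ) (X : Set (Fin n → ℝ)) (r : ℝ) : ℝ :=
  (1/2) * sSup {v : ℝ | ∃ x ∈ X, ∃ y ∈ X,
    v = sInf {w : ℝ | ∃ φ ∈ D.F, ∃ α : ℝ, 0 < α ∧ w = PhiFun D A g r x y φ α}}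

/-- `Φ_*(r)` defined through the inf-sup value:
`2Φ_*(r) = inf_{φ ∈ F, α > 0} sup_{x,y ∈ X} Φ_r(x, y; φ, α)`. -/
noncomputable def PhiStarIS (D : GoodPair Ω P E) (A : (Fin n → ℝ) →ᵃ[ℝ] E)
    (g : Fin n → ℝ) (X : Set (Fin n → ℝ)) (r : ℝ) : ℝ :=
  (1/2) * sInf {v : ℝ | ∃ φ ∈ D.F, ∃ α : ℝ, 0 < α ∧
    v = sSup {w : ℝ | ∃ x ∈ X, ∃ y ∈ X, w = PhiFun D A g r x y φ α}}

/-- `k` is an `ω`-good index for the family of estimates `ghatk` with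
thresholds `thresh`: `|ĝ^{k'}(ω) − ĝ^k(ω)| ≤ thresh k + thresh k' + 2δ`
for all `k ≤ k' < K`. -/
def isGoodIdx {Ω' : Type*} (K : ℕ) (ghatk : ℕ → Ω' → ℝ) (thresh : ℕ → ℝ)
    (δ : ℝ) (ω : Ω') (k : ℕ) : Prop :=
  k < K ∧ ∀ k', k ≤ k' → k' < K →
    |ghatk k' ω - ghatk k ω| ≤ thresh k + thresh k' + 2 * δ

/-- The smallest `ω`-good index. -/
noncomputable def kSel {Ω' : Type*} (K : ℕ) (ghatk : ℕ → Ω' → ℝ) (thresh : ℕ → ℝ)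
    (δ : ℝ) (ω : Ω') : ℕ :=
  sInf {k | isGoodIdx K ghatk thresh δ ω k}

/-- The Lepskii-type adaptive estimate `ĝ(ω) = ĝ^{k(ω)}(ω)`. -/
noncomputable def adaptEst {Ω' : Type*} (K : ℕ) (ghatk : ℕ → Ω' → ℝ)
    (thresh : ℕ → ℝ) (δ : ℝ) (ω : Ω') : ℝ :=
  ghatk (kSel K ghatk thresh δ ω) ω

/-! By Sion's minimax theorem some `x, y ∈ X` satisfy `Φ_r(x, y; φ, α) ≥ 2Φ_*(r)`, up to an
arbitrarily small loss, for all `φ` and `α`. Plugging in half the log-likelihood ratio gives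
`gᵀx - gᵀy ≥ 2Φ_*(r)` while the Hellinger affinity of the two observation laws is at least
`exp (-r)`. For `r = ln(1/(4ε))/2` the affinity is too large for a test with both error
probabilities below `ε`, so `Φ_*(r)` bounds the optimal risk from below, and since `Φ_*(r)/r` is
nonincreasing this carries over to `r = ln(2K/ε)`. Conversely, when all component estimates of
index `≥ k` succeed, which by the union bound fails with probability less than `ε`, the index `k`
is `ω`-good, so the selected index is at most `k` and the adaptive estimate errs by at most
`3Φ_*^k + 3δ`. -/

section ConvexAnalysis

variable {V W : Type*} [AddCommGroup V] [Module ℝ V] [AddCommGroup W] [Module ℝ W]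

theorem convexOn_perspective {S : Set V} {f : V → ℝ} (hf : ConvexOn ℝ S f) :
    ConvexOn ℝ {w : V × ℝ | w.2⁻¹ • w.1 ∈ S ∧ 0 < w.2} fun w => w.2 * f (w.2⁻¹ • w.1) := by
  have reweight : ∀ ⦃v v' : V⦄ ⦃α β a b : ℝ⦄, 0 < α → 0 < β → 0 ≤ a → 0 ≤ b → a + b = 1 →
      ∃ s t, 0 < a * α + b * β ∧ 0 ≤ s ∧ 0 ≤ t ∧ s + t = 1 ∧
        (a * α + b * β) * s = a * α ∧ (a * α + b * β) * t = b * β ∧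
        (a * α + b * β)⁻¹ • (a • v + b • v') = s • α⁻¹ • v + t • β⁻¹ • v' := by
    intro v v' α β a b hα hβ ha hb hab
    have hγ : 0 < a * α + b * β := convex_Ioi (0 : ℝ) hα hβ ha hb hab
    refine ⟨a * α / (a * α + b * β), b * β / (a * α + b * β), hγ, by positivity, by positivity,
      by rw [← add_div, div_self hγ.ne'], by field_simp, by field_simp, ?_⟩
    rw [smul_add, smul_smul, smul_smul, smul_smul, smul_smul]
    congr 2 <;> field_simp
  constructor
  · rintro ⟨v, α⟩ ⟨hv, hα⟩ ⟨v', β⟩ ⟨hv', hβ⟩ a b ha hb hab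
    obtain ⟨s, t, hγ, hs, ht, hst, -, -, hcomb⟩ :=
      reweight (v := v) (v' := v') hα hβ ha hb hab
    refine ⟨?_, hγ⟩
    simp only [Prod.smul_mk, Prod.mk_add_mk, smul_eq_mul]
    exact hcomb ▸ hf.1 hv hv' hs ht hst
  · rintro ⟨v, α⟩ ⟨hv, hα⟩ ⟨v', β⟩ ⟨hv', hβ⟩ a b ha hb hab
    obtain ⟨s, t, hγ, hs, ht, hst, hsα, htβ, hcomb⟩ :=
      reweight (v := v) (v' := v') hα hβ ha hb hab
    simp only [Prod.smul_mk, Prod.mk_add_mk, smul_eq_mul]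
    calc _ ≤ (a * α + b * β) * (s * f (α⁻¹ • v) + t * f (β⁻¹ • v')) :=
          mul_le_mul_of_nonneg_left (hcomb ▸ hf.2 hv hv' hs ht hst) hγ.le
      _ = _ := by rw [mul_add, ← mul_assoc, ← mul_assoc, hsα, htβ, mul_assoc, mul_assoc]

variable [TopologicalSpace W] [IsTopologicalAddGroup W] [ContinuousSMul ℝ W]

theorem continuousOn_of_convexOn_of_isOpen [T2Space W] [FiniteDimensional ℝ W]
    {T : Set W} {f : W → ℝ} (hT : IsOpen T) (hf : ConvexOn ℝ T f) : ContinuousOn f T := by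
  let e : W ≃L[ℝ] EuclideanSpace ℝ (Fin (Module.finrank ℝ W)) := toEuclidean
  have he : ContinuousOn (f ∘ e.symm) (e.symm ⁻¹' T) :=
    (hf.comp_linearMap e.symm.toLinearMap).continuousOn (hT.preimage e.symm.continuous)
  refine (he.comp e.continuous.continuousOn fun w hw => ?_).congr fun w _ => ?_
  · simpa using hw
  · simp

theorem exists_forall_lt_of_concaveOn_of_convexOn [TopologicalSpace V] [IsTopologicalAddGroup V]
    [ContinuousSMul ℝ V] {s : Set V} {T : Set W} {f : V → W → ℝ} {c : ℝ}
    (hs : IsCompact s) (hne : s.Nonempty) (hsc : Convex ℝ s) (hT : Convex ℝ T)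
    (hcont : ∀ w ∈ T, ContinuousOn (fun x => f x w) s)
    (hconc : ∀ w ∈ T, ConcaveOn ℝ s fun x => f x w)
    (hcont' : ∀ x ∈ s, ContinuousOn (f x) T) (hconv : ∀ x ∈ s, ConvexOn ℝ T (f x))
    (hlt : ∀ x ∈ s, ∃ w ∈ T, f x w < c) : ∃ w ∈ T, ∀ x ∈ s, f x w < c := by
  have husc : ∀ w ∈ T, UpperSemicontinuousOn (fun x => f x w) s := fun w hw =>
    (hcont w hw).upperSemicontinuousOn
  obtain ⟨t, ht⟩ := (UpperSemicontinuousOn.inter_biInter_preimage_Ici_eq_empty_iff_exists_finset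
      (f := fun w x => f x w) (c := c) hs husc).1 <| eq_empty_of_forall_notMem fun x hx => by
    obtain ⟨w, hw, hlt⟩ := hlt x hx.1
    exact (mem_iInter₂.1 hx.2 w hw).not_gt hlt
  obtain ⟨w, hw, h⟩ := Sion.exists_lt_iInf_of_lt_iInf_of_finite (f := fun x w => -f x w) (t := -c)
    hne hs (fun w hw => (hcont w hw).neg.lowerSemicontinuousOn)
    (fun w hw => (hconc w hw).neg.quasiconvexOn) hT
    (fun x hx => (hcont' x hx).neg.upperSemicontinuousOn)
    (fun x hx => (hconv x hx).neg.quasiconcaveOn) hsc (t.finite_toSet.image Subtype.val)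
    (by simp) fun x hx => by
      obtain ⟨w, hw, hlt⟩ := ht x hx
      exact ⟨w, mem_image_of_mem _ hw, neg_lt_neg hlt⟩
  exact ⟨w, hw, fun x hx => neg_lt_neg_iff.1 (h x hx)⟩

theorem le_and_nonneg_of_forall_pos_le_add_mul {a b c : ℝ} (h : ∀ α > 0, c ≤ a + α * b) :
    c ≤ a ∧ 0 ≤ b := by
  have hzero : Filter.Tendsto (fun α => a + α * b) (nhdsWithin 0 (Ioi 0)) (nhds a) := by
    have : Continuous fun α : ℝ => a + α * b := by fun_prop
    simpa using (this.tendsto 0).mono_left nhdsWithin_le_nhds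
  refine ⟨ge_of_tendsto hzero (eventually_mem_nhdsWithin.mono h), ?_⟩
  by_contra! hb
  obtain ⟨α, hlt, hα⟩ := (((Filter.tendsto_id.atTop_mul_const_of_neg hb).eventually_lt_atBot
    (c - a)).and (Filter.eventually_gt_atTop 0)).exists
  have := h α hα
  simp only [id] at hlt
  linarith

end ConvexAnalysis

section Integral

variable {Q : Measure Ω}

theorem integral_pos_of_forall_pos [NeZero Q] {u : Ω → ℝ} (hu : ∀ ω, 0 < u ω)
    (hui : Integrable u Q) : 0 < ∫ ω, u ω ∂Q := by
  rw [integral_pos_iff_support_of_nonneg (fun ω => (hu ω).le) hui,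
    Function.support_eq_univ fun ω => (hu ω).ne']
  exact Measure.measure_univ_pos.2 (NeZero.ne Q)

theorem integrable_exp_convexCombo {φ ψ : Ω → ℝ} (hφ : Integrable (fun ω => exp (φ ω)) Q)
    (hψ : Integrable (fun ω => exp (ψ ω)) Q) {a b : ℝ} (ha : 0 ≤ a) (hb : 0 ≤ b)
    (hab : a + b = 1) : Integrable (fun ω => exp ((a • φ + b • ψ) ω)) Q := by
  have hφm := aemeasurable_of_aemeasurable_exp hφ.aemeasurable
  have hψm := aemeasurable_of_aemeasurable_exp hψ.aemeasurable
  refine ((hφ.const_mul a).add (hψ.const_mul b)).mono'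
    ((hφm.const_smul a).add (hψm.const_smul b)).exp.aestronglyMeasurable (ae_of_all _ fun ω => ?_)
  rw [norm_of_nonneg (exp_pos _).le]
  exact convexOn_exp.2 (mem_univ _) (mem_univ _) ha hb hab

theorem convexOn_integral_exp :
    ConvexOn ℝ {φ : Ω → ℝ | Integrable (fun ω => exp (φ ω)) Q} fun φ => ∫ ω, exp (φ ω) ∂Q := by
  refine ⟨fun φ hφ ψ hψ a b ha hb hab => integrable_exp_convexCombo hφ hψ ha hb hab,
    fun φ hφ ψ hψ a b ha hb hab => ?_⟩
  calc ∫ ω, exp ((a • φ + b • ψ) ω) ∂Q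
      ≤ ∫ ω, (a * exp (φ ω) + b * exp (ψ ω)) ∂Q :=
        integral_mono (integrable_exp_convexCombo hφ hψ ha hb hab)
          ((hφ.const_mul a).add (hψ.const_mul b))
          fun ω => convexOn_exp.2 (mem_univ _) (mem_univ _) ha hb hab
    _ = a * ∫ ω, exp (φ ω) ∂Q + b * ∫ ω, exp (ψ ω) ∂Q := by
        rw [integral_add (hφ.const_mul a) (hψ.const_mul b), integral_const_mul,
          integral_const_mul]

theorem convexOn_log_integral_exp :
    ConvexOn ℝ {φ : Ω → ℝ | Integrable (fun ω => exp (φ ω)) Q}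
      fun φ => log (∫ ω, exp (φ ω) ∂Q) := by
  refine ⟨convexOn_integral_exp.1, fun φ hφ ψ hψ a b ha hb hab => ?_⟩
  rcases eq_zero_or_neZero Q with rfl | _
  · simp
  -- It suffices to treat `φ` and `ψ` shifted so that both exponential moments equal one.
  have normalized : ∀ {χ : Ω → ℝ}, Integrable (fun ω => exp (χ ω)) Q →
      Integrable (fun ω => exp (χ ω - log (∫ ω, exp (χ ω) ∂Q))) Q ∧
        ∫ ω, exp (χ ω - log (∫ ω, exp (χ ω) ∂Q)) ∂Q = 1 := fun {χ} hχ => by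
    have hpos := integral_exp_pos hχ
    simp only [exp_sub, exp_log hpos]
    exact ⟨hχ.div_const _, by rw [integral_div, div_self hpos.ne']⟩
  obtain ⟨hφi, hφ1⟩ := normalized hφ
  obtain ⟨hψi, hψ1⟩ := normalized hψ
  set s := log (∫ ω, exp (φ ω) ∂Q)
  set t := log (∫ ω, exp (ψ ω) ∂Q)
  have hshift : ∀ ω, exp ((a • φ + b • ψ) ω) =
      exp ((a • (fun ω => φ ω - s) + b • fun ω => ψ ω - t) ω) * exp (a * s + b * t) := fun ω => by
    rw [← exp_add]
    congr 1
    simp only [Pi.add_apply, Pi.smul_apply, smul_eq_mul]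
    ring
  have hle : ∫ ω, exp ((a • (fun ω => φ ω - s) + b • fun ω => ψ ω - t) ω) ∂Q ≤ 1 :=
    (convexOn_integral_exp.2 hφi hψi ha hb hab).trans_eq (by
      simp only [hφ1, hψ1, smul_eq_mul, mul_one, hab])
  rw [smul_eq_mul, smul_eq_mul,
    log_le_iff_le_exp (integral_exp_pos (integrable_exp_convexCombo hφ hψ ha hb hab))]
  simp only [hshift, integral_mul_const]
  exact mul_le_of_le_one_left (exp_pos _).le hle

theorem integrable_sqrt_mul {u v : Ω → ℝ} (hu0 : ∀ ω, 0 ≤ u ω) (hv0 : ∀ ω, 0 ≤ v ω)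
    (hu : Integrable u Q) (hv : Integrable v Q) : Integrable (fun ω => √(u ω * v ω)) Q := by
  refine (hu.add hv).mono' ?_ (ae_of_all _ fun ω => ?_)
  · exact (hu.aemeasurable.mul hv.aemeasurable).sqrt.aestronglyMeasurable
  rw [norm_of_nonneg (sqrt_nonneg _), sqrt_le_iff, Pi.add_apply]
  exact ⟨add_nonneg (hu0 ω) (hv0 ω),
    by nlinarith [mul_nonneg (hu0 ω) (hv0 ω), sq_nonneg (u ω), sq_nonneg (v ω)]⟩

theorem integral_sqrt_mul_le {u v : Ω → ℝ} (hu0 : ∀ ω, 0 ≤ u ω) (hv0 : ∀ ω, 0 ≤ v ω)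
    (hu : Integrable u Q) (hv : Integrable v Q) :
    ∫ ω, √(u ω * v ω) ∂Q ≤ √(∫ ω, u ω ∂Q) * √(∫ ω, v ω ∂Q) := by
  have memLp_sqrt : ∀ {w : Ω → ℝ}, (∀ ω, 0 ≤ w ω) → Integrable w Q →
      MemLp (fun ω => √(w ω)) (ENNReal.ofReal 2) Q := fun {w} hw0 hw => by
    rw [ENNReal.ofReal_ofNat, memLp_two_iff_integrable_sq hw.aemeasurable.sqrt.aestronglyMeasurable]
    simpa only [sq_sqrt (hw0 _)] using hw
  have h := integral_mul_le_Lp_mul_Lq_of_nonneg HolderConjugate.two_two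
    (ae_of_all Q fun ω => sqrt_nonneg (u ω)) (ae_of_all Q fun ω => sqrt_nonneg (v ω))
    (memLp_sqrt hu0 hu) (memLp_sqrt hv0 hv)
  simp only [rpow_two, sq_sqrt (hu0 _), sq_sqrt (hv0 _), ← sqrt_eq_rpow] at h
  simpa only [sqrt_mul (hu0 _)] using h

theorem tendsto_measureReal_lt_abs_atTop [IsFiniteMeasure Q] {u : Ω → ℝ} (hu : Measurable u) :
    Filter.Tendsto (fun N => Q.real {ω | N < |u ω|}) Filter.atTop (nhds 0) := by
  have h := tendsto_measure_norm_gt_of_isTightMeasureSet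
    (isTightMeasureSet_singleton (μ := Q.map u))
  simp only [mem_singleton_iff, iSup_iSup_eq_left, norm_eq_abs] at h
  refine ((ENNReal.tendsto_toReal ENNReal.zero_ne_top).comp h).congr fun N => ?_
  rw [Function.comp_apply, Measure.map_apply hu (measurableSet_lt measurable_const measurable_abs)]
  rfl

end Integral

namespace GoodPair

/-- The logarithm of the exponential moment of `φ` under the density `p μ`; concave in `μ` by the
definition of a good pair. -/
noncomputable def logMoment (D : GoodPair Ω P E) (φ : Ω → ℝ) (μ : E) : ℝ :=
  log (∫ ω, exp (φ ω) * D.p μ ω ∂P)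

/-- The Hellinger affinity (Bhattacharyya coefficient) of the densities `p μ` and `p ν`. -/
noncomputable def affinity (D : GoodPair Ω P E) (μ ν : E) : ℝ :=
  ∫ ω, √(D.p μ ω * D.p ν ω) ∂P

variable (D : GoodPair Ω P E) {μ ν : E} {φ : Ω → ℝ}

theorem integrable_p (hμ : μ ∈ D.M) : Integrable (D.p μ) P :=
  .of_integral_ne_zero (D.p_prob μ hμ ▸ one_ne_zero)

theorem neZero_measure (hμ : μ ∈ D.M) : NeZero P :=
  ⟨fun h => by simpa [h] using D.p_prob μ hμ⟩

theorem isProbabilityMeasure_obsMeasure (hμ : μ ∈ D.M) :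
    IsProbabilityMeasure (obsMeasure D μ) := by
  refine ⟨?_⟩
  rw [obsMeasure, withDensity_apply _ MeasurableSet.univ, Measure.restrict_univ,
    ← ofReal_integral_eq_lintegral_ofReal (D.integrable_p hμ)
      (ae_of_all _ fun ω => (D.p_pos μ hμ ω).le), D.p_prob μ hμ, ENNReal.ofReal_one]

theorem obsMeasure_real_apply (hμ : μ ∈ D.M) {B : Set Ω} (hB : MeasurableSet B) :
    (obsMeasure D μ).real B = ∫ ω in B, D.p μ ω ∂P := by
  have hp0 : ∀ ω, 0 ≤ D.p μ ω := fun ω => (D.p_pos μ hμ ω).le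
  rw [Measure.real, obsMeasure, withDensity_apply _ hB,
    ← ofReal_integral_eq_lintegral_ofReal (D.integrable_p hμ).restrict (ae_of_all _ hp0),
    ENNReal.toReal_ofReal (integral_nonneg hp0)]

theorem integrable_exp_obsMeasure (hμ : μ ∈ D.M) (hφ : φ ∈ D.F) :
    Integrable (fun ω => exp (φ ω)) (obsMeasure D μ) := by
  rw [obsMeasure, integrable_withDensity_iff (D.p_meas μ hμ).ennreal_ofReal
    (ae_of_all _ fun _ => ENNReal.ofReal_lt_top)]
  simpa only [ENNReal.toReal_ofReal (D.p_pos μ hμ _).le] using D.F_finite φ hφ μ hμ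

theorem logMoment_eq_log_integral_obsMeasure (hμ : μ ∈ D.M) :
    D.logMoment φ μ = log (∫ ω, exp (φ ω) ∂obsMeasure D μ) := by
  rw [obsMeasure, integral_withDensity_eq_integral_toReal_smul (D.p_meas μ hμ).ennreal_ofReal
    (ae_of_all _ fun _ => ENNReal.ofReal_lt_top)]
  simp only [ENNReal.toReal_ofReal (D.p_pos μ hμ _).le, smul_eq_mul, mul_comm (D.p μ _), logMoment]

theorem convexOn_logMoment (hμ : μ ∈ D.M) :
    ConvexOn ℝ univ fun φ : D.F => D.logMoment φ μ := by
  simp only [D.logMoment_eq_log_integral_obsMeasure hμ]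
  exact (convexOn_log_integral_exp.comp_linearMap D.F.subtype).subset
    (fun φ _ => D.integrable_exp_obsMeasure hμ φ.2) convex_univ

theorem moment_pos (hμ : μ ∈ D.M) (hφ : φ ∈ D.F) : 0 < ∫ ω, exp (φ ω) * D.p μ ω ∂P :=
  have := D.neZero_measure hμ
  integral_pos_of_forall_pos (fun ω => mul_pos (exp_pos _) (D.p_pos μ hμ ω)) (D.F_finite φ hφ μ hμ)

theorem integrable_affinity (hμ : μ ∈ D.M) (hν : ν ∈ D.M) :
    Integrable (fun ω => √(D.p μ ω * D.p ν ω)) P :=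
  integrable_sqrt_mul (fun ω => (D.p_pos μ hμ ω).le) (fun ω => (D.p_pos ν hν ω).le)
    (D.integrable_p hμ) (D.integrable_p hν)

theorem affinity_pos (hμ : μ ∈ D.M) (hν : ν ∈ D.M) : 0 < D.affinity μ ν :=
  have := D.neZero_measure hμ
  integral_pos_of_forall_pos (fun ω => sqrt_pos.2 (mul_pos (D.p_pos μ hμ ω) (D.p_pos ν hν ω)))
    (D.integrable_affinity hμ hν)

theorem affinity_comm : D.affinity μ ν = D.affinity ν μ := by
  simp only [affinity, mul_comm]

theorem affinity_self (hμ : μ ∈ D.M) : D.affinity μ μ = 1 := by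
  simp only [affinity, sqrt_mul_self (D.p_pos μ hμ _).le, D.p_prob μ hμ]

theorem two_mul_log_affinity_le (hμ : μ ∈ D.M) (hν : ν ∈ D.M) (hφ : φ ∈ D.F) :
    2 * log (D.affinity μ ν) ≤ D.logMoment φ μ + D.logMoment (-φ) ν := by
  have hφ' : -φ ∈ D.F := D.F.neg_mem hφ
  have hμpos := D.moment_pos hμ hφ
  have hνpos := D.moment_pos hν hφ'
  have cauchySchwarz : D.affinity μ ν ≤
      √(∫ ω, exp (φ ω) * D.p μ ω ∂P) * √(∫ ω, exp ((-φ) ω) * D.p ν ω ∂P) := by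
    refine Eq.trans_le ?_ (integral_sqrt_mul_le
      (fun ω => (mul_pos (exp_pos _) (D.p_pos μ hμ ω)).le)
      (fun ω => (mul_pos (exp_pos _) (D.p_pos ν hν ω)).le)
      (D.F_finite φ hφ μ hμ) (D.F_finite _ hφ' ν hν))
    simp only [affinity, Pi.neg_apply, mul_mul_mul_comm, ← exp_add, add_neg_cancel, exp_zero,
      one_mul]
  have hlog := log_le_log (D.affinity_pos hμ hν) cauchySchwarz
  rw [log_mul (sqrt_pos.2 hμpos).ne' (sqrt_pos.2 hνpos).ne', log_sqrt hμpos.le,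
    log_sqrt hνpos.le] at hlog
  simp only [logMoment]
  linarith

theorem logMoment_add_neg_nonneg (hμ : μ ∈ D.M) (hφ : φ ∈ D.F) :
    0 ≤ D.logMoment φ μ + D.logMoment (-φ) μ := by
  simpa [D.affinity_self hμ] using D.two_mul_log_affinity_le hμ hμ hφ

theorem logMoment_half_logratio (hμ : μ ∈ D.M) (hν : ν ∈ D.M) :
    D.logMoment ((2⁻¹ : ℝ) • fun ω => log (D.p ν ω / D.p μ ω)) μ = log (D.affinity μ ν) := by
  have hpoint : ∀ {a b : ℝ}, 0 < a → 0 < b → exp (2⁻¹ * log (b / a)) * a = √(a * b) := by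
    intro a b ha hb
    have hba : 0 < b / a := div_pos hb ha
    calc _ = √(b / a) * √(a * a) := by
          rw [inv_mul_eq_div, exp_half, exp_log hba, sqrt_mul_self ha.le]
      _ = √(a * b) := by
          rw [← sqrt_mul hba.le]
          congr 1
          field_simp
  simp only [logMoment, affinity, Pi.smul_apply, smul_eq_mul,
    hpoint (D.p_pos μ hμ _) (D.p_pos ν hν _)]

theorem exists_logMoment_eq_log_affinity (hμ : μ ∈ D.M) (hν : ν ∈ D.M) :
    ∃ φ ∈ D.F, D.logMoment φ μ = log (D.affinity μ ν) ∧
      D.logMoment (-φ) ν = log (D.affinity μ ν) := by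
  refine ⟨(2⁻¹ : ℝ) • fun ω => log (D.p ν ω / D.p μ ω),
    D.F.smul_mem _ (D.logratio_mem ν hν μ hμ), D.logMoment_half_logratio hμ hν, ?_⟩
  rw [D.affinity_comm, ← D.logMoment_half_logratio hν hμ, ← smul_neg]
  congr 2
  ext ω
  rw [Pi.neg_apply, ← log_inv, inv_div]

-- `ν ↦ log (affinity μ ν)` is an infimum over `φ` of functions that are concave in `ν`.
theorem concaveOn_log_affinity (hμ : μ ∈ D.M) :
    ConcaveOn ℝ D.M fun ν => log (D.affinity μ ν) := by
  refine ⟨D.M_convex, fun ν₁ h₁ ν₂ h₂ a b ha hb hab => ?_⟩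
  obtain ⟨φ, hφ, hφμ, hφν⟩ :=
    D.exists_logMoment_eq_log_affinity hμ (D.M_convex h₁ h₂ ha hb hab)
  have hconc : a * D.logMoment (-φ) ν₁ + b * D.logMoment (-φ) ν₂ ≤ D.logMoment (-φ) _ :=
    (D.F_concave (-φ) (D.F.neg_mem hφ)).2 h₁ h₂ ha hb hab
  have hle₁ := mul_le_mul_of_nonneg_left (D.two_mul_log_affinity_le hμ h₁ hφ) ha
  have hle₂ := mul_le_mul_of_nonneg_left (D.two_mul_log_affinity_le hμ h₂ hφ) hb
  have hsum : a * D.logMoment φ μ + b * D.logMoment φ μ = D.logMoment φ μ := by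
    rw [← add_mul, hab, one_mul]
  simp only [smul_eq_mul]
  linarith

theorem affinity_le_sqrt_add_sqrt (hμ : μ ∈ D.M) (hν : ν ∈ D.M) {B : Set Ω}
    (hB : MeasurableSet B) :
    D.affinity μ ν ≤ √((obsMeasure D μ).real B) + √((obsMeasure D ν).real Bᶜ) := by
  have setIntegral_le : ∀ {C : Set Ω}, MeasurableSet C → ∫ ω in C, √(D.p μ ω * D.p ν ω) ∂P ≤
      √((obsMeasure D μ).real C) * √((obsMeasure D ν).real C) := fun {C} hC => by
    rw [D.obsMeasure_real_apply hμ hC, D.obsMeasure_real_apply hν hC]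
    exact integral_sqrt_mul_le (fun ω => (D.p_pos μ hμ ω).le) (fun ω => (D.p_pos ν hν ω).le)
      (D.integrable_p hμ).restrict (D.integrable_p hν).restrict
  have sqrt_le_one : ∀ {ξ : E}, ξ ∈ D.M → ∀ C, √((obsMeasure D ξ).real C) ≤ 1 := fun hξ C =>
    have := D.isProbabilityMeasure_obsMeasure hξ
    sqrt_le_one.2 measureReal_le_one
  rw [affinity, ← integral_add_compl hB (D.integrable_affinity hμ hν)]
  exact add_le_add
    ((setIntegral_le hB).trans (mul_le_of_le_one_right (sqrt_nonneg _) (sqrt_le_one hν B)))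
    ((setIntegral_le hB.compl).trans (mul_le_of_le_one_left (sqrt_nonneg _) (sqrt_le_one hμ Bᶜ)))

theorem measureReal_lt_of_lt_affinity (hμ : μ ∈ D.M) (hν : ν ∈ D.M) {B : Set Ω}
    (hB : MeasurableSet B) {τ : ℝ} (hτ : 1 - τ < D.affinity μ ν)
    (hμB : √((obsMeasure D μ).real B) ≤ τ) : (obsMeasure D ν).real B < 4 * τ := by
  have := D.isProbabilityMeasure_obsMeasure hν
  have h := D.affinity_le_sqrt_add_sqrt hμ hν hB
  have hsq := sq_sqrt (measureReal_nonneg (μ := obsMeasure D ν) (s := Bᶜ))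
  rw [probReal_compl_eq_one_sub hB] at h hsq
  nlinarith [sq_nonneg (√(1 - (obsMeasure D ν).real B) - 1)]

variable {V : Type*} [NormedAddCommGroup V] [NormedSpace ℝ V] [FiniteDimensional ℝ V]
  (A : V →ᵃ[ℝ] E)

theorem isOpen_preimage_M : IsOpen (A ⁻¹' D.M) :=
  D.M_open.preimage A.continuous_of_finiteDimensional

theorem continuousOn_logMoment_comp (hφ : φ ∈ D.F) :
    ContinuousOn (fun x => D.logMoment φ (A x)) (A ⁻¹' D.M) :=
  ((D.F_concave φ hφ).comp_affineMap A).continuousOn (D.isOpen_preimage_M A)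

theorem continuousOn_affinity_comp (hμ : μ ∈ D.M) :
    ContinuousOn (fun x => D.affinity μ (A x)) (A ⁻¹' D.M) :=
  (((D.concaveOn_log_affinity hμ).comp_affineMap A).continuousOn
    (D.isOpen_preimage_M A)).rexp.congr fun _ hx => (exp_log (D.affinity_pos hμ hx)).symm

theorem exists_forall_measureReal_lt {X : Set V} (hX : IsCompact X) (hA : ∀ x ∈ X, A x ∈ D.M)
    {u : Ω → ℝ} (hu : Measurable u) {η : ℝ} (hη : 0 < η) :
    ∃ N : ℝ, ∀ x ∈ X, (obsMeasure D (A x)).real {ω | N < |u ω|} < η := by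
  have hlocal : ∀ x ∈ X, ∀ᶠ z in nhds x ×ˢ Filter.atTop,
      (obsMeasure D (A z.1)).real {ω | z.2 < |u ω|} < η := fun x hx => by
    have := D.isProbabilityMeasure_obsMeasure (hA x hx)
    have hnhds : A ⁻¹' D.M ∈ nhds x := (D.isOpen_preimage_M A).mem_nhds (hA x hx)
    have haff : ∀ᶠ x' in nhds x, 1 - η / 4 < D.affinity (A x) (A x') :=
      ((D.continuousOn_affinity_comp A (hA x hx)).continuousAt hnhds).eventually_const_lt
        (by simpa only [D.affinity_self (hA x hx)] using by linarith)
    have htail : ∀ᶠ N in Filter.atTop, √((obsMeasure D (A x)).real {ω | N < |u ω|}) < η / 4 :=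
      (tendsto_measureReal_lt_abs_atTop hu).sqrt.eventually_lt_const (by rw [sqrt_zero]; linarith)
    filter_upwards [(haff.and hnhds).prod_mk htail] with z ⟨⟨haff, hz⟩, htail⟩
    calc _ < 4 * (η / 4) := D.measureReal_lt_of_lt_affinity (hA x hx) hz
          (measurableSet_lt measurable_const hu.abs) haff htail.le
      _ = η := by ring
  have huniform := (Filter.eventually_swap_iff.1 (hX.mem_nhdsSet_prod_of_forall hlocal)).curry
  exact huniform.exists.imp fun N hN => hN.self_of_nhdsSet

end GoodPair

section SaddlePoint

variable (D : GoodPair Ω P E) (A : (Fin n → ℝ) →ᵃ[ℝ] E) (g : Fin n → ℝ) {r s c α : ℝ}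
  {x y : Fin n → ℝ} {X Y : Set (Fin n → ℝ)} {φ : Ω → ℝ}

theorem phiFun_eq : PhiFun D A g r x y φ α =
    g ⬝ᵥ x - g ⬝ᵥ y + α * D.logMoment (α⁻¹ • φ) (A y)
      + α * D.logMoment (-(α⁻¹ • φ)) (A x) + 2 * α * r := by
  simp only [PhiFun, GoodPair.logMoment, Pi.smul_apply, Pi.neg_apply, smul_eq_mul,
    div_eq_inv_mul, mul_neg]

theorem phiFun_sub_phiFun :
    PhiFun D A g r x y φ α - PhiFun D A g s x y φ α = 2 * α * (r - s) := by
  simp only [PhiFun]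
  ring

theorem two_mul_mul_le_phiFun_self (hx : A x ∈ D.M) (hφ : φ ∈ D.F) (hα : 0 ≤ α) :
    2 * α * r ≤ PhiFun D A g r x x φ α := by
  have := mul_nonneg hα (D.logMoment_add_neg_nonneg hx (D.F.smul_mem α⁻¹ hφ))
  rw [phiFun_eq]
  linarith

theorem convexOn_phiFun (hx : A x ∈ D.M) (hy : A y ∈ D.M) :
    ConvexOn ℝ {w : D.F × ℝ | 0 < w.2} fun w => PhiFun D A g r x y w.1 w.2 := by
  have hperspective : ∀ {f : D.F → ℝ}, ConvexOn ℝ univ f →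
      ConvexOn ℝ {w : D.F × ℝ | 0 < w.2} fun w => w.2 * f (w.2⁻¹ • w.1) := fun hf => by
    simpa using convexOn_perspective hf
  have hlinear : ConvexOn ℝ {w : D.F × ℝ | 0 < w.2} fun w => 2 * r * w.2 :=
    (((2 * r) • LinearMap.snd ℝ D.F ℝ).convexOn convex_univ).subset (subset_univ _)
      (hperspective (D.convexOn_logMoment hx)).1
  have hsum := (((hperspective (D.convexOn_logMoment hy)).add
    (hperspective ((D.convexOn_logMoment hx).comp_linearMap (-LinearMap.id)))).add
      hlinear).add_const (g ⬝ᵥ x - g ⬝ᵥ y)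
  refine hsum.congr fun w _ => ?_
  simp only [phiFun_eq, Pi.add_apply, Function.comp_apply, LinearMap.neg_apply, LinearMap.id_apply,
    Submodule.coe_neg, Submodule.coe_smul]
  ring

theorem concaveOn_phiFun (hX : Convex ℝ X) (hA : ∀ x ∈ X, A x ∈ D.M) (hφ : φ ∈ D.F)
    (hα : 0 ≤ α) :
    ConcaveOn ℝ (X ×ˢ X) fun z => PhiFun D A g r z.1 z.2 φ α := by
  have hlogMoment : ∀ {ψ}, ψ ∈ D.F → ∀ B : (Fin n → ℝ) × (Fin n → ℝ) →ₗ[ℝ] (Fin n → ℝ),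
      MapsTo B (X ×ˢ X) X → ConcaveOn ℝ (X ×ˢ X) fun z => α * D.logMoment ψ (A (B z)) :=
    fun hψ B hB => (((D.F_concave _ hψ).comp_affineMap (A.comp B.toAffineMap)).subset
      (fun z hz => hA _ (hB hz)) (hX.prod hX)).smul hα
  have hdot : ConcaveOn ℝ (X ×ˢ X) fun z : (Fin n → ℝ) × (Fin n → ℝ) =>
      g ⬝ᵥ z.1 - g ⬝ᵥ z.2 :=
    ((dotProductBilin ℝ ℝ g ∘ₗ (LinearMap.fst ℝ _ _ - LinearMap.snd ℝ _ _)).concaveOn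
      (hX.prod hX)).congr fun z _ => dotProduct_sub g z.1 z.2
  simp only [phiFun_eq]
  exact ((hdot.add (hlogMoment (D.F.smul_mem _ hφ) (.snd ℝ _ _) fun z hz => hz.2)).add
    (hlogMoment (D.F.neg_mem (D.F.smul_mem _ hφ)) (.fst ℝ _ _) fun z hz => hz.1)).add_const _

theorem continuousOn_phiFun (hA : ∀ x ∈ X, A x ∈ D.M) (hφ : φ ∈ D.F) :
    ContinuousOn (fun z : (Fin n → ℝ) × (Fin n → ℝ) => PhiFun D A g r z.1 z.2 φ α) (X ×ˢ X) := by
  have hφ' := D.F.smul_mem α⁻¹ hφ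
  have hfst := (D.continuousOn_logMoment_comp A (D.F.neg_mem hφ')).comp
    continuousOn_fst fun z (hz : z ∈ X ×ˢ X) => hA _ hz.1
  have hsnd := (D.continuousOn_logMoment_comp A hφ').comp
    continuousOn_snd fun z (hz : z ∈ X ×ˢ X) => hA _ hz.2
  have hdot : Continuous fun z : (Fin n → ℝ) × (Fin n → ℝ) => g ⬝ᵥ z.1 - g ⬝ᵥ z.2 :=
    (continuous_const.dotProduct continuous_fst).sub (continuous_const.dotProduct continuous_snd)
  simp only [phiFun_eq]
  exact ((hdot.continuousOn.add (hsnd.const_mul α)).add (hfst.const_mul α)).add continuousOn_const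

/-- The objective of the inf-sup problem `2Φ_*(r) = inf_{φ, α} sup_{x, y ∈ X} Φ_r(x, y; φ, α)`,
spelled as in `PhiStarIS`. -/
noncomputable def phiSup (X : Set (Fin n → ℝ)) (r : ℝ) (φ : Ω → ℝ) (α : ℝ) : ℝ :=
  sSup {w : ℝ | ∃ x ∈ X, ∃ y ∈ X, w = PhiFun D A g r x y φ α}

theorem phiFun_le_phiSup (hX : IsCompact X) (hA : ∀ x ∈ X, A x ∈ D.M) (hφ : φ ∈ D.F)
    (hx : x ∈ X) (hy : y ∈ X) : PhiFun D A g r x y φ α ≤ phiSup D A g X r φ α := by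
  refine le_csSup (((hX.prod hX).bddAbove_image
    (continuousOn_phiFun D A g (r := r) (α := α) hA hφ)).mono ?_) ⟨x, hx, y, hy, rfl⟩
  rintro w ⟨x, hx, y, hy, rfl⟩
  exact ⟨(x, y), ⟨hx, hy⟩, rfl⟩

theorem phiSup_nonneg (hA : ∀ x ∈ X, A x ∈ D.M) (hφ : φ ∈ D.F) (hα : 0 ≤ α) (hr : 0 ≤ r) :
    0 ≤ phiSup D A g X r φ α := by
  rcases X.eq_empty_or_nonempty with rfl | ⟨x, hx⟩
  · simp [phiSup]
  · exact Real.sSup_nonneg' ⟨_, ⟨x, hx, x, hx, rfl⟩,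
      le_trans (by positivity) (two_mul_mul_le_phiFun_self D A g (hA x hx) hφ hα)⟩

theorem phiSup_mono (hXY : X ⊆ Y) (hY : IsCompact Y) (hA : ∀ x ∈ Y, A x ∈ D.M) (hφ : φ ∈ D.F)
    (hα : 0 ≤ α) (hr : 0 ≤ r) : phiSup D A g X r φ α ≤ phiSup D A g Y r φ α := by
  refine Real.sSup_le ?_ (phiSup_nonneg D A g hA hφ hα hr)
  rintro w ⟨x, hx, y, hy, rfl⟩
  exact phiFun_le_phiSup D A g hY hA hφ (hXY hx) (hXY hy)

theorem mul_phiSup_le (hne : X.Nonempty) (hX : IsCompact X) (hA : ∀ x ∈ X, A x ∈ D.M)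
    (hφ : φ ∈ D.F) (hα : 0 ≤ α) (hs : 0 < s) (hsr : s ≤ r) :
    s * phiSup D A g X r φ α ≤ r * phiSup D A g X s φ α := by
  obtain ⟨x₀, hx₀⟩ := hne
  have hlower : 2 * α * s ≤ phiSup D A g X s φ α :=
    (two_mul_mul_le_phiFun_self D A g (hA x₀ hx₀) hφ hα).trans
      (phiFun_le_phiSup D A g hX hA hφ hx₀ hx₀)
  rw [← le_div_iff₀' hs]
  refine csSup_le ⟨_, x₀, hx₀, x₀, hx₀, rfl⟩ ?_
  rintro w ⟨x, hx, y, hy, rfl⟩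
  rw [le_div_iff₀' hs]
  calc s * PhiFun D A g r x y φ α
      = s * PhiFun D A g s x y φ α + (r - s) * (2 * α * s) := by
        linear_combination
          s * phiFun_sub_phiFun D A g (r := r) (s := s) (x := x) (y := y) (φ := φ) (α := α)
    _ ≤ s * phiSup D A g X s φ α + (r - s) * phiSup D A g X s φ α :=
        add_le_add (mul_le_mul_of_nonneg_left (phiFun_le_phiSup D A g hX hA hφ hx hy) hs.le)
          (mul_le_mul_of_nonneg_left hlower (sub_nonneg.2 hsr))
    _ = r * phiSup D A g X s φ α := by ring

theorem two_mul_phiStarIS : 2 * PhiStarIS D A g X r =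
    sInf {v : ℝ | ∃ φ ∈ D.F, ∃ α : ℝ, 0 < α ∧ v = phiSup D A g X r φ α} := by
  rw [PhiStarIS, ← mul_assoc, mul_one_div_cancel two_ne_zero, one_mul]
  rfl

theorem two_mul_phiStarIS_le_phiSup (hA : ∀ x ∈ X, A x ∈ D.M) (hφ : φ ∈ D.F) (hα : 0 < α)
    (hr : 0 ≤ r) : 2 * PhiStarIS D A g X r ≤ phiSup D A g X r φ α := by
  rw [two_mul_phiStarIS]
  refine csInf_le ⟨0, ?_⟩ ⟨φ, hφ, α, hα, rfl⟩
  rintro v ⟨ψ, hψ, β, hβ, rfl⟩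
  exact phiSup_nonneg D A g hA hψ hβ.le hr

theorem le_two_mul_phiStarIS (h : ∀ φ ∈ D.F, ∀ α > 0, c ≤ phiSup D A g X r φ α) :
    c ≤ 2 * PhiStarIS D A g X r := by
  rw [two_mul_phiStarIS]
  refine le_csInf ⟨_, 0, D.F.zero_mem, 1, one_pos, rfl⟩ ?_
  rintro v ⟨φ, hφ, α, hα, rfl⟩
  exact h φ hφ α hα

theorem phiStarIS_mono (hXY : X ⊆ Y) (hY : IsCompact Y) (hA : ∀ x ∈ Y, A x ∈ D.M)
    (hr : 0 ≤ r) : PhiStarIS D A g X r ≤ PhiStarIS D A g Y r := by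
  refine le_of_mul_le_mul_left (le_two_mul_phiStarIS D A g fun φ hφ α hα => ?_) two_pos
  exact (two_mul_phiStarIS_le_phiSup D A g (fun x hx => hA x (hXY hx)) hφ hα hr).trans
    (phiSup_mono D A g hXY hY hA hφ hα.le hr)

theorem mul_phiStarIS_le (hne : X.Nonempty) (hX : IsCompact X) (hA : ∀ x ∈ X, A x ∈ D.M)
    (hs : 0 < s) (hsr : s ≤ r) : s * PhiStarIS D A g X r ≤ r * PhiStarIS D A g X s := by
  have hr : 0 < r := hs.trans_le hsr
  suffices h : s * (2 * PhiStarIS D A g X r) / r ≤ 2 * PhiStarIS D A g X s by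
    rw [div_le_iff₀ hr] at h
    linarith
  refine le_two_mul_phiStarIS D A g fun φ hφ α hα => (div_le_iff₀' hr).2 ?_
  exact (mul_le_mul_of_nonneg_left (two_mul_phiStarIS_le_phiSup D A g hA hφ hα hr.le) hs.le).trans
    (mul_phiSup_le D A g hne hX hA hφ hα.le hs hsr)

theorem exists_forall_le_phiFun (hne : X.Nonempty) (hX : IsCompact X) (hXc : Convex ℝ X)
    (hA : ∀ x ∈ X, A x ∈ D.M) (hr : 0 ≤ r) (hc : c < 2 * PhiStarIS D A g X r) :
    ∃ x ∈ X, ∃ y ∈ X, ∀ φ ∈ D.F, ∀ α > 0, c ≤ PhiFun D A g r x y φ α := by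
  have := D.F_fd
  obtain ⟨x₀, hx₀⟩ := hne
  let f : (Fin n → ℝ) × (Fin n → ℝ) → D.F × ℝ → ℝ := fun z w => PhiFun D A g r z.1 z.2 w.1 w.2
  have hopen : IsOpen {w : D.F × ℝ | 0 < w.2} := isOpen_lt continuous_const continuous_snd
  have hconvex : ∀ z ∈ X ×ˢ X, ConvexOn ℝ {w : D.F × ℝ | 0 < w.2} (f z) :=
    fun z hz => convexOn_phiFun D A g (hA _ hz.1) (hA _ hz.2)
  have hcontinuous : ∀ z ∈ X ×ˢ X, ContinuousOn (f z) {w : D.F × ℝ | 0 < w.2} :=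
    fun z hz => continuousOn_of_convexOn_of_isOpen hopen (hconvex z hz)
  by_contra! hcon
  obtain ⟨⟨φ, α⟩, hα, hlt⟩ := exists_forall_lt_of_concaveOn_of_convexOn
    (f := f) (hX.prod hX) ⟨(x₀, x₀), hx₀, hx₀⟩
    (hXc.prod hXc) (hconvex (x₀, x₀) ⟨hx₀, hx₀⟩).1
    (fun w _ => continuousOn_phiFun D A g hA w.1.2)
    (fun w hw => concaveOn_phiFun D A g hXc hA w.1.2 (le_of_lt hw))
    hcontinuous hconvex
    fun z hz => by
      obtain ⟨φ, hφ, α, hα, hlt⟩ := hcon z.1 hz.1 z.2 hz.2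
      exact ⟨(⟨φ, hφ⟩, α), hα, hlt⟩
  refine hc.not_ge ((two_mul_phiStarIS_le_phiSup D A g hA φ.2 hα hr).trans
    (csSup_le ⟨_, x₀, hx₀, x₀, hx₀, rfl⟩ ?_))
  rintro w ⟨x, hx, y, hy, rfl⟩
  exact (hlt (x, y) ⟨hx, hy⟩).le

-- Testing the minimax pair with half the log-likelihood ratio, scaled by `α`, turns the inequality
-- into an affine one in `α`, whose two coefficients give the two claims.
theorem exists_sub_ge_and_affinity_ge (hne : X.Nonempty) (hX : IsCompact X) (hXc : Convex ℝ X)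
    (hA : ∀ x ∈ X, A x ∈ D.M) (hr : 0 ≤ r) (hc : c < 2 * PhiStarIS D A g X r) :
    ∃ x ∈ X, ∃ y ∈ X, c ≤ g ⬝ᵥ x - g ⬝ᵥ y ∧ exp (-r) ≤ D.affinity (A y) (A x) := by
  obtain ⟨x, hx, y, hy, hxy⟩ := exists_forall_le_phiFun D A g hne hX hXc hA hr hc
  obtain ⟨φ, hφ, hφy, hφx⟩ := D.exists_logMoment_eq_log_affinity (hA y hy) (hA x hx)
  have haffine : ∀ α > 0,
      c ≤ g ⬝ᵥ x - g ⬝ᵥ y + α * (2 * (log (D.affinity (A y) (A x)) + r)) := fun α hα => by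
    refine (hxy (α • φ) (D.F.smul_mem α hφ) α hα).trans_eq ?_
    rw [phiFun_eq, inv_smul_smul₀ hα.ne', hφy, hφx]
    ring
  obtain ⟨hle, hnonneg⟩ := le_and_nonneg_of_forall_pos_le_add_mul haffine
  exact ⟨x, hx, y, hy, hle,
    (le_log_iff_exp_le (D.affinity_pos (hA y hy) (hA x hx))).1 (by linarith)⟩

end SaddlePoint

section Risk

variable (D : GoodPair Ω P E) (A : (Fin n → ℝ) →ᵃ[ℝ] E) (g : Fin n → ℝ) {ε ρ : ℝ}
  {X : Set (Fin n → ℝ)} {ghat : Ω → ℝ}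

theorem obsMeasure_lt_of_iSup_lt {b : ℝ≥0∞}
    (h : (⨆ x ∈ X, obsMeasure D (A x) {ω | ρ < |ghat ω - g ⬝ᵥ x|}) < b) {x : Fin n → ℝ}
    (hx : x ∈ X) : obsMeasure D (A x) {ω | ρ < |ghat ω - g ⬝ᵥ x|} < b :=
  (le_iSup₂ (f := fun x _ => obsMeasure D (A x) {ω | ρ < |ghat ω - g ⬝ᵥ x|}) x hx).trans_lt h

theorem nonneg_of_iSup_obsMeasure_lt (hne : X.Nonempty) (hA : ∀ x ∈ X, A x ∈ D.M) (hε : ε ≤ 1)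
    (h : (⨆ x ∈ X, obsMeasure D (A x) {ω | ρ < |ghat ω - g ⬝ᵥ x|}) < ENNReal.ofReal ε) :
    0 ≤ ρ := by
  by_contra! hρ
  obtain ⟨x, hx⟩ := hne
  have := D.isProbabilityMeasure_obsMeasure (hA x hx)
  have hlt := obsMeasure_lt_of_iSup_lt D A g h hx
  rw [eq_univ_of_forall (s := {ω | ρ < |ghat ω - g ⬝ᵥ x|}) fun ω => hρ.trans_le (abs_nonneg _),
    measure_univ] at hlt
  exact hlt.not_ge (ENNReal.ofReal_le_one.2 hε)

theorem risk_le (hne : X.Nonempty) (hA : ∀ x ∈ X, A x ∈ D.M) (hε : ε ≤ 1)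
    (h : (⨆ x ∈ X, obsMeasure D (A x) {ω | ρ < |ghat ω - g ⬝ᵥ x|}) < ENNReal.ofReal ε) :
    Risk D A g X ghat ε ≤ ρ :=
  csInf_le ⟨0, fun _ hρ' => nonneg_of_iSup_obsMeasure_lt D A g hne hA hε hρ'⟩ h

theorem exists_iSup_obsMeasure_lt (hX : IsCompact X) (hA : ∀ x ∈ X, A x ∈ D.M)
    (hghat : Measurable ghat) (hε : 0 < ε) :
    ∃ ρ : ℝ, (⨆ x ∈ X, obsMeasure D (A x) {ω | ρ < |ghat ω - g ⬝ᵥ x|}) < ENNReal.ofReal ε := by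
  obtain ⟨N, hN⟩ := D.exists_forall_measureReal_lt A hX hA hghat (half_pos hε)
  obtain ⟨G, hG⟩ := hX.exists_bound_of_continuousOn (f := fun x => g ⬝ᵥ x)
    (continuous_const.dotProduct continuous_id).continuousOn
  refine ⟨N + G, lt_of_le_of_lt (iSup₂_le fun x hx => ?_)
    ((ENNReal.ofReal_lt_ofReal_iff hε).2 (half_lt_self hε))⟩
  have := D.isProbabilityMeasure_obsMeasure (hA x hx)
  have hsubset : {ω | N + G < |ghat ω - g ⬝ᵥ x|} ⊆ {ω | N < |ghat ω|} := fun ω hω => by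
    have hω : N + G < |ghat ω - g ⬝ᵥ x| := hω
    have hGx : |g ⬝ᵥ x| ≤ G := hG x hx
    have : N < |ghat ω| := by linarith [abs_sub (ghat ω) (g ⬝ᵥ x)]
    exact this
  calc _ ≤ obsMeasure D (A x) {ω | N < |ghat ω|} := measure_mono hsubset
    _ = ENNReal.ofReal ((obsMeasure D (A x)).real {ω | N < |ghat ω|}) := by
        rw [ofReal_measureReal]
    _ ≤ ENNReal.ofReal (ε / 2) := ENNReal.ofReal_le_ofReal (hN x hx).le

theorem log_one_div_four_mul_pos (hε : ε ∈ Ioo (0 : ℝ) (1 / 4)) : 0 < log (1 / (4 * ε)) :=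
  log_pos ((one_lt_div (by linarith [hε.1])).2 (by linarith [hε.2]))

theorem exp_neg_half_log_one_div_four_mul (hε : 0 < ε) :
    exp (-(log (1 / (4 * ε)) / 2)) = √ε + √ε := by
  rw [one_div, log_inv, neg_div, neg_neg, exp_half, exp_log (by positivity),
    sqrt_mul (by norm_num), show (4 : ℝ) = 2 ^ 2 by norm_num, sqrt_sq two_pos.le, two_mul]

-- An estimate of risk `ρ < Φ_*` would yield a midpoint test between the two signals of a hard pair,
-- with both error probabilities below `ε`.
theorem phiStarIS_le_risk (hne : X.Nonempty) (hX : IsCompact X) (hXc : Convex ℝ X)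
    (hA : ∀ x ∈ X, A x ∈ D.M) (hghat : Measurable ghat) (hε : ε ∈ Ioo (0 : ℝ) (1 / 4)) :
    PhiStarIS D A g X (log (1 / (4 * ε)) / 2) ≤ Risk D A g X ghat ε := by
  refine le_csInf (exists_iSup_obsMeasure_lt D A g hX hA hghat hε.1) fun ρ hρ => ?_
  by_contra! hlt
  have hr := (half_pos (log_one_div_four_mul_pos hε)).le
  obtain ⟨c, hρc, hc⟩ := exists_between (mul_lt_mul_of_pos_left hlt two_pos)
  obtain ⟨x, hx, y, hy, hcxy, haff⟩ := exists_sub_ge_and_affinity_ge D A g hne hX hXc hA hr hc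
  rw [exp_neg_half_log_one_div_four_mul hε.1] at haff
  have herror : ∀ z ∈ X, ∀ B ⊆ {ω | ρ < |ghat ω - g ⬝ᵥ z|},
      √((obsMeasure D (A z)).real B) < √ε := fun z hz B hB =>
    sqrt_lt_sqrt measureReal_nonneg <| ENNReal.toReal_lt_of_lt_ofReal <|
      (measure_mono hB).trans_lt (obsMeasure_lt_of_iSup_lt D A g hρ hz)
  set B : Set Ω := {ω | (g ⬝ᵥ x + g ⬝ᵥ y) / 2 ≤ ghat ω}
  have htest := D.affinity_le_sqrt_add_sqrt (hA y hy) (hA x hx)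
    (measurableSet_le measurable_const hghat : MeasurableSet B)
  have hyB := herror y hy B fun ω (hω : _ ≤ ghat ω) =>
    lt_of_lt_of_le (b := ghat ω - g ⬝ᵥ y) (by linarith) (le_abs_self _)
  have hxB := herror x hx Bᶜ fun ω hω => by
    have hω : ghat ω < (g ⬝ᵥ x + g ⬝ᵥ y) / 2 := not_le.1 hω
    exact lt_of_lt_of_le (b := -(ghat ω - g ⬝ᵥ x)) (by linarith) (neg_le_abs _)
  linarith

theorem phiStarIS_le_riskStar (hne : X.Nonempty) (hX : IsCompact X) (hXc : Convex ℝ X)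
    (hA : ∀ x ∈ X, A x ∈ D.M) (hε : ε ∈ Ioo (0 : ℝ) (1 / 4)) :
    PhiStarIS D A g X (log (1 / (4 * ε)) / 2) ≤ RiskStar D A g X ε := by
  refine le_csInf ⟨_, fun _ => 0, measurable_const, rfl⟩ ?_
  rintro ρ ⟨ghat, hghat, rfl⟩
  exact phiStarIS_le_risk D A g hne hX hXc hA hghat hε

theorem phiStarIS_le_mul_riskStar (hne : X.Nonempty) (hX : IsCompact X) (hXc : Convex ℝ X)
    (hA : ∀ x ∈ X, A x ∈ D.M) (hε : ε ∈ Ioo (0 : ℝ) (1 / 4)) {r : ℝ}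
    (hr : log (1 / (4 * ε)) / 2 ≤ r) :
    PhiStarIS D A g X r ≤ 2 * r / log (1 / (4 * ε)) * RiskStar D A g X ε := by
  have hlog := log_one_div_four_mul_pos hε
  rw [div_mul_eq_mul_div, le_div_iff₀' hlog]
  calc log (1 / (4 * ε)) * PhiStarIS D A g X r
      = 2 * (log (1 / (4 * ε)) / 2 * PhiStarIS D A g X r) := by ring
    _ ≤ 2 * (r * PhiStarIS D A g X (log (1 / (4 * ε)) / 2)) :=
        mul_le_mul_of_nonneg_left (mul_phiStarIS_le D A g hne hX hA (half_pos hlog) hr) two_pos.le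
    _ ≤ 2 * (r * RiskStar D A g X ε) :=
        mul_le_mul_of_nonneg_left (mul_le_mul_of_nonneg_left
          (phiStarIS_le_riskStar D A g hne hX hXc hA hε) ((half_pos hlog).le.trans hr)) two_pos.le
    _ = 2 * r * RiskStar D A g X ε := by ring

end Risk

section Adaptation

variable {K k : ℕ} {ghatk : ℕ → Ω → ℝ} {thresh : ℕ → ℝ} {δ : ℝ}

theorem abs_adaptEst_sub_le {Ω' : Type*} {ghatk : ℕ → Ω' → ℝ} {ω : Ω'} {a : ℝ} (hk : k < K)
    (hthresh : ∀ j ≤ k, thresh j ≤ thresh k)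
    (h : ∀ j, k ≤ j → j < K → |ghatk j ω - a| ≤ thresh j + δ) :
    |adaptEst K ghatk thresh δ ω - a| ≤ 3 * thresh k + 3 * δ := by
  have hgood : isGoodIdx K ghatk thresh δ ω k := by
    refine ⟨hk, fun j hkj hj => ?_⟩
    have hk' := h k le_rfl hk
    rw [abs_sub_comm] at hk'
    linarith [abs_sub_le (ghatk j ω) a (ghatk k ω), h j hkj hj]
  have hsel : isGoodIdx K ghatk thresh δ ω (kSel K ghatk thresh δ ω) :=
    Nat.sInf_mem (s := {k | isGoodIdx K ghatk thresh δ ω k}) ⟨k, hgood⟩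
  have hle : kSel K ghatk thresh δ ω ≤ k := Nat.sInf_le hgood
  have hclose := hsel.2 k hle hk
  rw [abs_sub_comm] at hclose
  rw [adaptEst]
  linarith [abs_sub_le (ghatk (kSel K ghatk thresh δ ω) ω) (ghatk k ω) a, h k le_rfl hk,
    hthresh _ hle]

theorem measure_lt_abs_adaptEst_sub_le (Q : Measure Ω) (hk : k < K) (a : ℝ)
    (hthresh : ∀ j ≤ k, thresh j ≤ thresh k) :
    Q {ω | 3 * thresh k + 3 * δ < |adaptEst K ghatk thresh δ ω - a|} ≤
      ∑ j ∈ Finset.Ico k K, Q {ω | thresh j + δ < |ghatk j ω - a|} := by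
  refine (measure_mono fun ω hω => ?_).trans (measure_biUnion_finset_le _ _)
  contrapose! hω
  simp only [mem_iUnion, Finset.mem_Ico, mem_ofPred_eq, not_exists, not_lt] at hω ⊢
  exact abs_adaptEst_sub_le hk hthresh fun j hkj hj => hω j ⟨hkj, hj⟩

theorem risk_adaptEst_le (D : GoodPair Ω P E) (A : (Fin n → ℝ) →ᵃ[ℝ] E) (g : Fin n → ℝ)
    {Xs : ℕ → Set (Fin n → ℝ)} {ε : ℝ} (hk : k < K) (hne : (Xs k).Nonempty)
    (hA : ∀ x ∈ Xs k, A x ∈ D.M) (hnest : ∀ j, k ≤ j → j < K → Xs k ⊆ Xs j) (hε : ε ≤ 1)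
    (hthresh : ∀ j ≤ k, thresh j ≤ thresh k)
    (hrisk : ∀ j < K, (⨆ x ∈ Xs j, obsMeasure D (A x)
      {ω | thresh j + δ < |ghatk j ω - g ⬝ᵥ x|}) < ENNReal.ofReal (ε / K)) :
    Risk D A g (Xs k) (adaptEst K ghatk thresh δ) ε ≤ 3 * thresh k + 3 * δ := by
  have hK : (K : ℝ) ≠ 0 := Nat.cast_ne_zero.2 hk.ne_bot
  refine risk_le D A g hne hA hε ?_
  calc (⨆ x ∈ Xs k, obsMeasure D (A x)
        {ω | 3 * thresh k + 3 * δ < |adaptEst K ghatk thresh δ ω - g ⬝ᵥ x|})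
      ≤ ∑ j ∈ Finset.Ico k K, ⨆ x ∈ Xs j, obsMeasure D (A x)
          {ω | thresh j + δ < |ghatk j ω - g ⬝ᵥ x|} :=
        iSup₂_le fun x hx => (measure_lt_abs_adaptEst_sub_le _ hk _ hthresh).trans <|
          Finset.sum_le_sum fun j hj => le_iSup₂ (f := fun x _ => obsMeasure D (A x)
            {ω | thresh j + δ < |ghatk j ω - g ⬝ᵥ x|}) x
            (hnest j (Finset.mem_Ico.1 hj).1 (Finset.mem_Ico.1 hj).2 hx)
    _ < ∑ _j ∈ Finset.Ico k K, ENNReal.ofReal (ε / K) :=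
        ENNReal.sum_lt_sum_of_nonempty (Finset.nonempty_Ico.2 hk)
          fun j hj => hrisk j (Finset.mem_Ico.1 hj).2
    _ ≤ ∑ _j ∈ Finset.range K, ENNReal.ofReal (ε / K) :=
        Finset.sum_le_sum_of_subset fun j hj => Finset.mem_range.2 (Finset.mem_Ico.1 hj).2
    _ = ENNReal.ofReal ε := by
        rw [Finset.sum_const, Finset.card_range, ← ENNReal.ofReal_nsmul, nsmul_eq_mul,
          mul_div_cancel₀ _ hK]

theorem log_one_div_four_mul_le {ε : ℝ} (hε : 0 < ε) (hK : 1 ≤ K) :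
    log (1 / (4 * ε)) ≤ log (2 * K / ε) := by
  have : (1 : ℝ) ≤ K := Nat.one_le_cast.2 hK
  refine log_le_log (by positivity) ?_
  rw [← div_div]
  gcongr
  linarith

theorem adaptive_estimate_risk_general (D : GoodPair Ω P E)
    (K : ℕ) (Xs : ℕ → Set (Fin n → ℝ))
    (hXne : ∀ k < K, (Xs k).Nonempty) (hXcp : ∀ k < K, IsCompact (Xs k))
    (hXcv : ∀ k < K, Convex ℝ (Xs k))
    (hnest : ∀ k k', k ≤ k' → k' < K → Xs k ⊆ Xs k')
    (A : (Fin n → ℝ) →ᵃ[ℝ] E) (hA : ∀ x ∈ Xs (K - 1), A x ∈ D.M)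
    (g : Fin n → ℝ) (ε : ℝ) (hε : ε ∈ Ioo (0 : ℝ) (1 / 4)) (δ : ℝ)
    (ghatk : ℕ → Ω → ℝ)
    (hrisk : ∀ k < K,
      (⨆ x ∈ Xs k, obsMeasure D (A x)
          {ω | PhiStarIS D A g (Xs k) (log (2 * K / ε)) + δ < |ghatk k ω - g ⬝ᵥ x|})
        < ENNReal.ofReal (ε / K)) :
    ∀ k < K,
      Risk D A g (Xs k)
          (adaptEst K ghatk (fun j => PhiStarIS D A g (Xs j) (log (2 * K / ε))) δ) ε
        ≤ (6 * log (2 * K / ε) / log (1 / (4 * ε))) * RiskStar D A g (Xs k) ε + 3 * δ := by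
  intro k hk
  have hlog := log_one_div_four_mul_pos hε
  have hle := log_one_div_four_mul_le hε.1 (Nat.one_le_of_lt hk)
  have hAk : ∀ x ∈ Xs k, A x ∈ D.M := fun x hx => hA x (hnest k (K - 1) (by lia) (by lia) hx)
  have hthresh : ∀ j ≤ k, PhiStarIS D A g (Xs j) (log (2 * K / ε)) ≤
      PhiStarIS D A g (Xs k) (log (2 * K / ε)) := fun j hj =>
    phiStarIS_mono D A g (hnest j k hj hk) (hXcp k hk) hAk (hlog.le.trans hle)
  have hadapt := risk_adaptEst_le D A g hk (hXne k hk) hAk (hnest k) (by linarith [hε.2])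
    hthresh hrisk
  have hoptimal := phiStarIS_le_mul_riskStar D A g (hXne k hk) (hXcp k hk) (hXcv k hk) hAk hε
    (by linarith : log (1 / (4 * ε)) / 2 ≤ log (2 * K / ε))
  calc _ ≤ 3 * PhiStarIS D A g (Xs k) (log (2 * K / ε)) + 3 * δ := hadapt
    _ ≤ 3 * (2 * log (2 * K / ε) / log (1 / (4 * ε)) * RiskStar D A g (Xs k) ε) + 3 * δ := by
        gcongr
    _ = _ := by ring

end Adaptation

/-- **Proposition 5.1, bound (5.3).** In the adaptive estimation scheme, the
`ε`-risk of the Lepskii-type adaptive estimate `ĝ` on each `X^k` satisfies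
`Risk^k(ĝ; ε) ≤ [6 ln(2K/ε)/ln(1/(4ε))]·Risk_*^k(ε) + 3δ`. -/
theorem adaptive_estimate_risk
    {Ω : Type*} [MeasurableSpace Ω] [TopologicalSpace Ω] [PolishSpace Ω] [BorelSpace Ω]
    {P : Measure Ω} [SigmaFinite P] {m n : ℕ}
    (D : GoodPair Ω P (Fin m → ℝ))
    (K : ℕ) (hK : 1 ≤ K) (Xs : ℕ → Set (Fin n → ℝ))
    (hXne : ∀ k < K, (Xs k).Nonempty) (hXcp : ∀ k < K, IsCompact (Xs k))
    (hXcv : ∀ k < K, Convex ℝ (Xs k))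
    (hnest : ∀ k k', k ≤ k' → k' < K → Xs k ⊆ Xs k')
    (A : (Fin n → ℝ) →ᵃ[ℝ] (Fin m → ℝ)) (hA : ∀ x ∈ Xs (K - 1), A x ∈ D.M)
    (g : Fin n → ℝ) (ε : ℝ) (hε : ε ∈ Set.Ioo (0 : ℝ) (1/4)) (δ : ℝ) (hδ : 0 < δ)
    (ghatk : ℕ → Ω → ℝ) (hmeas : ∀ k < K, Measurable (ghatk k))
    (hrisk : ∀ k < K,
      (⨆ x ∈ Xs k, obsMeasure D (A x)
          {ω | PhiStarIS D A g (Xs k) (Real.log (2 * K / ε)) + δ < |ghatk k ω - g ⬝ᵥ x|})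
        < ENNReal.ofReal (ε / K)) :
    ∀ k < K,
      Risk D A g (Xs k)
          (adaptEst K ghatk
            (fun j => PhiStarIS D A g (Xs j) (Real.log (2 * K / ε))) δ) ε
        ≤ (6 * Real.log (2 * K / ε) / Real.log (1 / (4 * ε))) *
            RiskStar D A g (Xs k) ε + 3 * δ :=
  adaptive_estimate_risk_general D K Xs hXne hXcp hXcv hnest A hA g ε hε δ ghatk hrisk
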